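/- arXiv:1201.2384 — 2 statements merged into one kernel-verified Lean document; each statement's English description precedes it below -/
import Mathlib

section
/- (Symmetric equilibrium proposition.) Suppose all players share the same pure strategy set S_1 (so s_i = s_1 for all i), and for each player i fix a permutation σ_i of S_1. Let U = {x ∈ Δ : x_{iα} = x_{1σ_i(α)} for all i and α}. Let φ be a continuous incentive function such that x_{iα} + φ_{iα}(x) ≥ 0 for every x ∈ Δ, i, α, and such that φ_{1σ_i(α)}(x) = φ_{iα}(x) for every x ∈ U, every player i, and every α. Then there exists an incentive equilibrium x̂ ∈ U, i.e., x̂ ∈ U with φ_{iα}(x̂) = x̂_{iα} · Σ_β φ_{iβ}(x̂) for every player i and strategy α. -/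
open Finset

/-- Mixed strategy profile space `Δ`: player `i` has `s i + 1` pure strategies
(so every player has at least one strategy). -/
def Δset {n : ℕ} (s : Fin n → ℕ) : Set (∀ i, Fin (s i + 1) → ℝ) :=
  {x | (∀ i α, 0 ≤ x i α) ∧ ∀ i, ∑ α, x i α = 1}

/-- The `α`-th standard unit vector of `ℝ^{m+1}` (pure strategy `α`). -/
def pureVec {m : ℕ} (α : Fin (m + 1)) : Fin (m + 1) → ℝ :=
  fun β => if β = α then 1 else 0

/-- Multilinear extension of a payoff function defined on pure profiles. -/
noncomputable def mulExt {n : ℕ} {s : Fin n → ℕ} (u : (∀ j, Fin (s j + 1)) → ℝ)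
    (x : ∀ i, Fin (s i + 1) → ℝ) : ℝ :=
  ∑ p : ∀ j, Fin (s j + 1), (∏ j, x j (p j)) * u p

/-- The updating map `T(x)_i = (x_i + Σ_α φ_{iα}(x) e_{iα}) / (1 + Σ_β φ_{iβ}(x))`. -/
noncomputable def Tmap {n : ℕ} {s : Fin n → ℕ}
    (φ : (∀ i, Fin (s i + 1) → ℝ) → ∀ i, Fin (s i + 1) → ℝ)
    (x : ∀ i, Fin (s i + 1) → ℝ) : ∀ i, Fin (s i + 1) → ℝ :=
  fun i α => (x i α + φ x i α) / (1 + ∑ β, φ x i β)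

/-- `φ` is an incentive function. -/
def IsInc {n : ℕ} {s : Fin n → ℕ}
    (φ : (∀ i, Fin (s i + 1) → ℝ) → ∀ i, Fin (s i + 1) → ℝ) : Prop :=
  (∀ x i α, x i α = 0 → 0 ≤ φ x i α) ∧ ∀ x i, (∑ β, φ x i β) ≠ -1

/-- `x` is an incentive equilibrium for `φ`. -/
def IncEq {n : ℕ} {s : Fin n → ℕ}
    (φ : (∀ i, Fin (s i + 1) → ℝ) → ∀ i, Fin (s i + 1) → ℝ)
    (x : ∀ i, Fin (s i + 1) → ℝ) : Prop :=
  ∀ i α, φ x i α = x i α * ∑ β, φ x i β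

/-- `x` is a Nash equilibrium: each player's payoff is the maximum over pure deviations. -/
def NashEq {n : ℕ} {s : Fin n → ℕ} (u : Fin n → (∀ j, Fin (s j + 1)) → ℝ)
    (x : ∀ i, Fin (s i + 1) → ℝ) : Prop :=
  ∀ i, mulExt (u i) x =
    Finset.univ.sup' Finset.univ_nonempty
      (fun α => mulExt (u i) (Function.update x i (pureVec α)))

set_option linter.unusedSectionVars false
section Scarf
variable {E I : Type} [Fintype E] [DecidableEq E] [Fintype I] [DecidableEq I]

/-- Dominance of a finite set with respect to a family of orders. -/
def ScDom (r : I → E → ℕ) (R : Finset E) : Prop := ∀ y, ∃ i, ∀ x ∈ R, r i y ≤ r i x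

theorem scDom_mono {r : I → E → ℕ} {R S : Finset E} (h : ScDom r S) (hRS : R ⊆ S) : ScDom r R := by
  intro y
  obtain ⟨i, hi⟩ := h y
  exact ⟨i, fun x hx => hi x (hRS hx)⟩

/-- The unique maximum (in order `i`) of the points beating `m j` for all `j ≠ i`. -/
def ScMax (r : I → E → ℕ) (m : I → E) (i : I) (e : E) : Prop :=
  (∀ j, j ≠ i → r j (m j) < r j e) ∧
    ∀ y, (∀ j, j ≠ i → r j (m j) < r j y) → r i y ≤ r i e

theorem scMax_exists (r : I → E → ℕ) (m : I → E) (i : I) (y : E)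
    (hy : ∀ j, j ≠ i → r j (m j) < r j y) : ∃ e, ScMax r m i e := by
  classical
  obtain ⟨e, he, hm⟩ := (univ.filter (fun y => ∀ j, j ≠ i → r j (m j) < r j y)).exists_max_image
    (r i) ⟨y, by simpa using hy⟩
  exact ⟨e, by simpa using he, fun y hy => hm y (by simpa using hy)⟩

theorem scMax_unique {r : I → E → ℕ} (hr : ∀ i, Function.Injective (r i)) {m : I → E} {i : I}
    {e e' : E} (h : ScMax r m i e) (h' : ScMax r m i e') : e = e' :=
  hr i (le_antisymm (h'.2 e h.1) (h.2 e' h'.1))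

theorem sc_structure (r : I → E → ℕ) (hr : ∀ i, Function.Injective (r i)) (R : Finset E)
    (hne : R.Nonempty) (hcard : R.card + 1 = Fintype.card I) (hD : ScDom r R) :
    ∃ (m : I → E) (i₁ i₂ : I), i₁ ≠ i₂ ∧ (∀ i, m i ∈ R ∧ ∀ x ∈ R, r i (m i) ≤ r i x) ∧
      m i₁ = m i₂ ∧
      ∀ e, (e ∉ R ∧ ScDom r (insert e R)) ↔ (ScMax r m i₁ e ∨ ScMax r m i₂ e) := by
  have hm : ∀ i, ∃ a ∈ R, ∀ x ∈ R, r i a ≤ r i x := fun i => R.exists_min_image (r i) hne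
  choose m hmR hmin using hm
  have hself : ∀ x ∈ R, ∃ i, m i = x := by
    intro x hx
    obtain ⟨i, hi⟩ := hD x
    exact ⟨i, hr i (le_antisymm (hmin i x hx) (hi _ (hmR i)))⟩
  obtain ⟨i₁, -, i₂, -, h12, hm12⟩ := Finset.exists_ne_map_eq_of_card_lt_of_maps_to
    (s := (univ : Finset I)) (t := R) (f := m) (by rw [card_univ]; omega) (fun i _ => hmR i)
  -- surjectivity restricted to the complement of a point
  have hs1 : ∀ x ∈ R, ∃ j, j ≠ i₁ ∧ m j = x := by
    intro x hx
    obtain ⟨i, hi⟩ := hself x hx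
    by_cases h : i = i₁
    · exact ⟨i₂, h12.symm, by rw [← hm12, ← h, hi]⟩
    · exact ⟨i, h, hi⟩
  have hs2 : ∀ x ∈ R, ∃ j, j ≠ i₂ ∧ m j = x := by
    intro x hx
    obtain ⟨i, hi⟩ := hself x hx
    by_cases h : i = i₂
    · exact ⟨i₁, h12, by rw [hm12, ← h, hi]⟩
    · exact ⟨i, h, hi⟩
  have himg : (univ.erase i₁).image m = R := by
    ext x
    simp only [mem_image, mem_erase, mem_univ, and_true]
    constructor
    · rintro ⟨j, -, rfl⟩; exact hmR j
    · intro hx; exact hs1 x hx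
  have hinj : Set.InjOn m (univ.erase i₁ : Finset I) := by
    apply Finset.injOn_of_card_image_eq
    rw [himg, card_erase_of_mem (mem_univ _), card_univ]; omega
  -- only i₁, i₂ coincide
  have hinj' : ∀ j k, j ≠ k → m j = m k → j = i₁ ∨ j = i₂ := by
    intro j k hjk hmjk
    by_cases hj : j = i₁
    · exact Or.inl hj
    by_cases hk : k = i₁
    · right
      apply hinj (by simpa using hj) (by simpa using h12.symm)
      rw [hmjk, hk, hm12]
    · exact absurd (hinj (by simpa using hj) (by simpa using hk) hmjk) hjk
  have back : ∀ i, (∀ x ∈ R, ∃ j, j ≠ i ∧ m j = x) → ∀ e, ScMax r m i e →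
      e ∉ R ∧ ScDom r (insert e R) := by
    intro i hs e he
    have heR : e ∉ R := by
      intro h
      obtain ⟨j, hj, hje⟩ := hs e h
      have := he.1 j hj
      rw [hje] at this
      exact lt_irrefl _ this
    refine ⟨heR, ?_⟩
    have hle : ∀ y, (∀ j, j ≠ i → r j (m j) < r j y) → r i y ≤ r i (m i) := by
      intro y hy
      obtain ⟨k, hk⟩ := hD y
      by_cases hki : k = i
      · subst hki; exact hk _ (hmR _)
      · exact absurd (hk _ (hmR k)) (not_le.2 (hy k hki))
    intro y
    by_cases hy : ∀ j, j ≠ i → r j (m j) < r j y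
    · refine ⟨i, fun x hx => ?_⟩
      rcases mem_insert.1 hx with rfl | hx
      · exact he.2 y hy
      · exact (hle y hy).trans (hmin i x hx)
    · push Not at hy
      obtain ⟨j, hji, hj⟩ := hy
      refine ⟨j, fun x hx => ?_⟩
      rcases mem_insert.1 hx with rfl | hx
      · exact hj.trans (he.1 j hji).le
      · exact hj.trans (hmin j x hx)
  refine ⟨m, i₁, i₂, h12, fun i => ⟨hmR i, hmin i⟩, hm12, fun e => ⟨?_, ?_⟩⟩
  · rintro ⟨heR, hDe⟩
    obtain ⟨i, hi⟩ := hDe e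
    -- all other coordinates are not beaten by e
    have hother : ∀ j, j ≠ i → r j (m j) < r j e := by
      intro j hji
      by_contra hcon
      push Not at hcon
      -- both i, j have e as min : then R has too few minima
      have key : ∀ x ∈ R, ∃ k, k ≠ i ∧ k ≠ j ∧ m k = x := by
        intro x hx
        obtain ⟨k, hk⟩ := hDe x
        have hkx : m k = x := hr k (le_antisymm (hmin k x hx) (hk _ (mem_insert_of_mem (hmR k))))
        have hxe : x ≠ e := fun h => heR (h ▸ hx)
        have hke : r k x < r k e :=
          lt_of_le_of_ne (hk e (mem_insert_self _ _)) (fun h => hxe (hr k h))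
        refine ⟨k, ?_, ?_, hkx⟩
        · rintro rfl
          exact absurd (hi x (mem_insert_of_mem hx)) (not_le.2 hke)
        · rintro rfl
          rw [hkx] at hcon
          exact absurd hcon (not_le.2 hke)
      have hsub : R ⊆ ((univ.erase i).erase j).image m := by
        intro x hx
        obtain ⟨k, h1, h2, h3⟩ := key x hx
        exact mem_image.2 ⟨k, by simp [h1, h2], h3⟩
      have h1 := (card_le_card hsub).trans card_image_le
      rw [card_erase_of_mem (by simp [hji]), card_erase_of_mem (mem_univ _), card_univ] at h1
      have : 0 < R.card := hne.card_pos
      omega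
    have hmax : ScMax r m i e := by
      refine ⟨hother, fun y hy => ?_⟩
      obtain ⟨k, hk⟩ := hDe y
      by_cases hki : k = i
      · subst hki; exact hk e (mem_insert_self _ _)
      · exact absurd (hk _ (mem_insert_of_mem (hmR k))) (not_le.2 (hy k hki))
    -- i is i₁ or i₂
    obtain ⟨k, hk⟩ := hDe (m i)
    have hki : k ≠ i := by
      rintro rfl
      have h1 := hi (m k) (mem_insert_of_mem (hmR k))
      have h2 := hk e (mem_insert_self _ _)
      exact heR (hr k (le_antisymm h1 h2) ▸ hmR k)
    have hkm : m k = m i :=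
      hr k (le_antisymm (hmin k _ (hmR i)) (hk _ (mem_insert_of_mem (hmR k))))
    rcases hinj' i k hki.symm hkm.symm with h | h
    · left; rwa [h] at hmax
    · right; rwa [h] at hmax
  · rintro (h | h)
    · exact back i₁ hs1 e h
    · exact back i₂ hs2 e h

open Classical in
/-- Every room that is not colourful has an even number of typed doors. -/
theorem sc_room_even (c : E → I) (i₀ : I) (R : Finset E)
    (hcard : R.card = Fintype.card I) (hnc : R.image c ≠ univ) :
    Even (R.filter (fun x => (R.erase x).image c = univ.erase i₀)).card := by
  by_cases hex : ∃ x ∈ R, (R.erase x).image c = univ.erase i₀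
  swap
  · rw [Finset.filter_eq_empty_iff.2]
    · simp
    · intro x hx h; exact hex ⟨x, hx, h⟩
  obtain ⟨x, hx, hxi⟩ := hex
  have hcx : c x ≠ i₀ := by
    intro h
    apply hnc
    rw [← insert_erase hx, image_insert, hxi, h, insert_erase (mem_univ _)]
  have : c x ∈ (R.erase x).image c := by rw [hxi]; simp [hcx]
  obtain ⟨x', hx', hcc⟩ := mem_image.1 this
  have hinj : Set.InjOn c (R.erase x : Finset E) := by
    apply Finset.injOn_of_card_image_eq
    rw [hxi, card_erase_of_mem (mem_univ _), card_erase_of_mem hx, card_univ, hcard]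
  have hx'R := (mem_erase.1 hx').2
  have hne := (mem_erase.1 hx').1
  have hset : R.filter (fun x => (R.erase x).image c = univ.erase i₀) = {x, x'} := by
    ext z
    simp only [mem_filter, mem_insert, mem_singleton]
    constructor
    · rintro ⟨hz, hzi⟩
      by_contra hcon
      push Not at hcon
      have hcz : c z ≠ i₀ := by
        intro h
        have : c z ∈ (R.erase x).image c := mem_image_of_mem _ (mem_erase.2 ⟨hcon.1, hz⟩)
        rw [hxi] at this
        simp [h] at this
      have : c z ∈ (R.erase z).image c := by rw [hzi]; simp [hcz]
      obtain ⟨w, hw, hwc⟩ := mem_image.1 this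
      obtain ⟨hwz, hwR⟩ := mem_erase.1 hw
      by_cases hwx : w = x
      · subst hwx
        apply hcon.2
        exact hinj (by simp [hcon.1, hz]) (by simp [hne, hx'R]) (by rw [← hwc, hcc])
      · exact hwz (hinj (by simp [hwx, hwR]) (by simp [hcon.1, hz]) hwc)
    · rintro (rfl | rfl)
      · exact ⟨hx, hxi⟩
      · refine ⟨hx'R, ?_⟩
        rw [← hxi]
        ext k
        simp only [mem_image, mem_erase]
        constructor
        · rintro ⟨a, ⟨h1, h2⟩, rfl⟩
          by_cases ha : a = x
          · exact ⟨z, ⟨hne, hx'R⟩, by rw [ha, hcc]⟩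
          · exact ⟨a, ⟨ha, h2⟩, rfl⟩
        · rintro ⟨a, ⟨h1, h2⟩, rfl⟩
          by_cases ha : a = z
          · exact ⟨x, ⟨hne.symm, hx⟩, by rw [ha, hcc]⟩
          · exact ⟨a, ⟨ha, h2⟩, rfl⟩
  rw [hset, card_pair hne.symm]
  decide

open Classical in
theorem sc_main (r : I → E → ℕ) (c : E → I) (i₀ : I) (D₀ : Finset E)
    (hD₀ : ScDom r D₀) (hD₀c : D₀.image c = univ.erase i₀) (hD₀k : D₀.card + 1 = Fintype.card I)
    (hodd : (univ.filter (fun e => e ∉ D₀ ∧ ScDom r (insert e D₀))).card = 1)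
    (heven : ∀ D : Finset E, D ≠ D₀ → ScDom r D → D.image c = univ.erase i₀ →
      D.card + 1 = Fintype.card I →
      (univ.filter (fun e => e ∉ D ∧ ScDom r (insert e D))).card = 2) :
    ∃ R : Finset E, ScDom r R ∧ R.image c = univ := by
  by_contra hcon
  push Not at hcon
  set Rooms : Finset (Finset E) := univ.filter (fun R => R.card = Fintype.card I ∧ ScDom r R)
  set Doors : Finset (Finset E) := univ.filter
    (fun D => D.card + 1 = Fintype.card I ∧ ScDom r D ∧ D.image c = univ.erase i₀) with hDoors
  have hdc := Finset.sum_card_bipartiteAbove_eq_sum_card_bipartiteBelow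
    (s := Doors) (t := Rooms) (fun D R => D ⊆ R)
  have hab : ∀ D ∈ Doors, (Rooms.bipartiteAbove (fun D R => D ⊆ R) D).card =
      (univ.filter (fun e => e ∉ D ∧ ScDom r (insert e D))).card := by
    intro D hD
    obtain ⟨hDk, hDd, hDc⟩ : D.card + 1 = Fintype.card I ∧ ScDom r D ∧ D.image c = univ.erase i₀ := by
      simpa [hDoors] using hD
    symm
    apply Finset.card_bij (fun e _ => insert e D)
    · intro e he
      simp only [mem_filter, mem_univ, true_and] at he
      simp only [Finset.mem_bipartiteAbove, Rooms, mem_filter, mem_univ, true_and]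
      exact ⟨⟨by rw [card_insert_of_notMem he.1, hDk], he.2⟩, subset_insert _ _⟩
    · intro a ha b hb hab
      simp only [mem_filter, mem_univ, true_and] at ha hb
      have : a ∈ insert b D := hab ▸ mem_insert_self a D
      exact (mem_insert.1 this).resolve_right ha.1
    · intro R hR
      simp only [Finset.mem_bipartiteAbove, Rooms, mem_filter, mem_univ, true_and] at hR
      obtain ⟨⟨hk, hd⟩, hs⟩ := hR
      obtain ⟨e, heD, he⟩ := Finset.exists_eq_insert_iff.2 ⟨hs, by omega⟩
      exact ⟨e, by simp [heD, he, hd], he⟩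
  have hbe : ∀ R ∈ Rooms, Even (Doors.bipartiteBelow (fun D R => D ⊆ R) R).card := by
    intro R hR
    obtain ⟨hk, hd⟩ : R.card = Fintype.card I ∧ ScDom r R := by simpa [Rooms] using hR
    have := sc_room_even c i₀ R hk (hcon R hd)
    convert this using 1
    symm
    apply Finset.card_bij (fun e _ => R.erase e)
    · intro e he
      simp only [mem_filter] at he
      simp only [Finset.mem_bipartiteBelow, hDoors, mem_filter, mem_univ, true_and]
      exact ⟨⟨by rw [card_erase_add_one he.1, hk], scDom_mono hd (erase_subset _ _), he.2⟩,
        erase_subset _ _⟩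
    · intro a ha b hb hab
      simp only [mem_filter] at ha hb
      by_contra hne
      have : a ∈ R.erase b := mem_erase.2 ⟨hne, ha.1⟩
      rw [← hab] at this
      simp at this
    · intro D hD
      simp only [Finset.mem_bipartiteBelow, hDoors, mem_filter, mem_univ, true_and] at hD
      obtain ⟨⟨hDk, hDd, hDc⟩, hs⟩ := hD
      obtain ⟨e, heD, he⟩ := Finset.exists_eq_insert_iff.2 ⟨hs, by omega⟩
      subst he
      exact ⟨e, by simp [heD, hDc], by simp [heD]⟩
  have hR : Even (∑ R ∈ Rooms, (Doors.bipartiteBelow (fun D R => D ⊆ R) R).card) :=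
    Finset.even_sum _ hbe
  have hD0 : D₀ ∈ Doors := by simp [hDoors, hD₀, hD₀c, hD₀k]
  rw [← hdc, Finset.sum_congr rfl hab, ← Finset.add_sum_erase _ _ hD0, hodd] at hR
  have hE : Even (∑ D ∈ Doors.erase D₀,
      (univ.filter (fun e => e ∉ D ∧ ScDom r (insert e D))).card) := by
    apply Finset.even_sum
    intro D hD
    obtain ⟨hne, hD⟩ := mem_erase.1 hD
    obtain ⟨hDk, hDd, hDc⟩ : D.card + 1 = Fintype.card I ∧ ScDom r D ∧ D.image c = univ.erase i₀ := by
      simpa [hDoors] using hD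
    rw [heven D hne hDd hDc hDk]
    decide
  obtain ⟨a, ha⟩ := hR
  obtain ⟨b, hb⟩ := hE
  omega
end Scarf

/-- Orders extended by slack elements. -/
def scExt {T : Type} {n : ℕ} (r : Fin n → T → ℕ) (B : ℕ) (i : Fin n) : T ⊕ Fin n → ℕ
  | Sum.inl t => 1 + r i t
  | Sum.inr j => if j = i then 0 else B + 1 + j

theorem scExt_inj {T : Type} {n : ℕ} (r : Fin n → T → ℕ) (B : ℕ)
    (hr : ∀ i, Function.Injective (r i)) (hB : ∀ i t, r i t < B) (i : Fin n) :
    Function.Injective (scExt r B i) := by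
  rintro (t | j) (t' | j') h
  · simp only [scExt] at h
    rw [hr i (show r i t = r i t' by omega)]
  · have := hB i t
    simp only [scExt] at h
    split_ifs at h <;> omega
  · have := hB i t'
    simp only [scExt] at h
    split_ifs at h <;> omega
  · simp only [scExt] at h
    split_ifs at h with h1 h2 h2
    · rw [h1, h2]
    · omega
    · omega
    · congr 1; apply Fin.ext; omega

open Classical in
theorem sc_ext {T : Type} [Fintype T] [Nonempty T] {n : ℕ} (hn : 2 ≤ n) (r : Fin n → T → ℕ) (B : ℕ)
    (hr : ∀ i, Function.Injective (r i)) (hB : ∀ i t, r i t < B) (c : T → Fin n) :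
    ∃ R : Finset (T ⊕ Fin n), ScDom (scExt r B) R ∧
      ∀ i, Sum.inr i ∉ R → ∃ t, Sum.inl t ∈ R ∧ c t = i := by
  have hinj := scExt_inj r B hr hB
  set q := scExt r B with hq
  have q0 : ∀ i, q i (Sum.inr i) = 0 := by intro i; simp [hq, scExt]
  have q1 : ∀ i t, q i (Sum.inl t) = 1 + r i t := by intro i t; simp [hq, scExt]
  have q2 : ∀ i j, j ≠ i → q i (Sum.inr j) = B + 1 + j := by intro i j h; simp [hq, scExt, h]
  let i₀ : Fin n := ⟨0, by omega⟩
  let c' : T ⊕ Fin n → Fin n := Sum.elim c id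
  let D₀ : Finset (T ⊕ Fin n) := (univ.erase i₀).image Sum.inr
  have hD₀mem : ∀ j, Sum.inr j ∈ D₀ ↔ j ≠ i₀ := by intro j; simp [D₀]
  have hD₀inl : ∀ t, Sum.inl t ∉ D₀ := by intro t; simp [D₀]
  have hcard₀ : D₀.card + 1 = Fintype.card (Fin n) := by
    rw [card_image_of_injective _ Sum.inr_injective, card_erase_add_one (mem_univ _), card_univ]
  have hdom₀ : ScDom q D₀ := by
    rintro (t | j)
    · refine ⟨i₀, ?_⟩
      rintro (t' | j) h
      · exact absurd h (hD₀inl _)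
      · rw [q1, q2 _ _ ((hD₀mem j).1 h)]
        have := hB i₀ t
        omega
    · exact ⟨j, fun x _ => by rw [q0]; exact Nat.zero_le _⟩
  have hne₀ : D₀.Nonempty := ⟨Sum.inr ⟨1, by omega⟩, (hD₀mem _).2 (by simp [i₀, Fin.ext_iff])⟩
  obtain ⟨R, hR, hRc⟩ := sc_main q c' i₀ D₀ hdom₀ (by
      ext k; simp [D₀, c']) hcard₀ (by
      obtain ⟨m, i₁, i₂, h12, hm, hm12, hiff⟩ := sc_structure q hinj D₀ hne₀ hcard₀ hdom₀
      have hmj : ∀ j, j ≠ i₀ → m j = Sum.inr j := by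
        intro j hj
        apply hinj j
        have := (hm j).2 _ ((hD₀mem j).2 hj)
        rw [q0] at this ⊢
        omega
      obtain ⟨t⟩ := (inferInstance : Nonempty T)
      obtain ⟨e, he⟩ := scMax_exists q m i₀ (Sum.inl t) (by
        intro j hj; rw [hmj j hj, q0, q1]; omega)
      have hno : ∀ k, k ≠ i₀ → m i₀ = m k → ∀ e, ¬ ScMax q m k e := by
        intro k hk hmk e he
        rw [hmj k hk] at hmk
        have h0 := he.1 i₀ hk.symm
        rw [hmk, q2 _ _ hk] at h0
        rcases e with t | j
        · rw [q1] at h0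
          have := hB i₀ t
          omega
        · by_cases hj0 : j = i₀
          · rw [hj0, q0] at h0; omega
          · by_cases hjk : j = k
            · rw [hjk, q2 _ _ hk] at h0; omega
            · have := he.1 j hjk
              rw [q0] at this; omega
      rw [card_eq_one]
      refine ⟨e, ?_⟩
      ext z
      rw [mem_filter, hiff z]
      simp only [mem_univ, true_and, mem_singleton]
      by_cases h1 : i₁ = i₀
      · have h2 := hno i₂ (by rw [← h1]; exact h12.symm) (by rw [← h1, hm12])
        constructor
        · rintro (h | h)
          · rw [h1] at h; exact scMax_unique hinj h he
          · exact absurd h (h2 z)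
        · rintro rfl; left; rwa [h1]
      · have h2 : i₂ = i₀ := by
          by_contra h2
          rw [hmj _ h1, hmj _ h2] at hm12
          exact h12 (Sum.inr_injective hm12)
        have h3 := hno i₁ h1 (by rw [← h2, hm12])
        constructor
        · rintro (h | h)
          · exact absurd h (h3 z)
          · rw [h2] at h; exact scMax_unique hinj h he
        · rintro rfl; right; rwa [h2])
    (by
      intro D hne hD hDc hDk
      have hinl : ∃ t, Sum.inl t ∈ D := by
        by_contra hcon
        push Not at hcon
        apply hne
        apply Finset.eq_of_subset_of_card_le
        · rintro (t | j) h
          · exact absurd h (hcon t)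
          · rw [hD₀mem]
            have : c' (Sum.inr j) ∈ D.image c' := mem_image_of_mem _ h
            rw [hDc] at this
            simpa [c'] using this
        · omega
      obtain ⟨t, ht⟩ := hinl
      obtain ⟨m, i₁, i₂, h12, hm, hm12, hiff⟩ := sc_structure q hinj D ⟨_, ht⟩ hDk hD
      have hex : ∀ i, ∃ e, ScMax q m i e := by
        intro i
        apply scMax_exists q m i (Sum.inr i)
        intro j hj
        rw [q2 _ _ hj.symm]
        have h1 := (hm j).2 _ ht
        rw [q1] at h1
        have := hB j t
        omega
      obtain ⟨e₁, he₁⟩ := hex i₁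
      obtain ⟨e₂, he₂⟩ := hex i₂
      rw [card_eq_two]
      refine ⟨e₁, e₂, ?_, ?_⟩
      · rintro rfl
        obtain ⟨k, hk⟩ := hD e₁
        have h1 := hk _ (hm k).1
        by_cases hk1 : k = i₁
        · exact absurd h1 (not_le.2 (he₂.1 k (by rw [hk1]; exact h12)))
        · exact absurd h1 (not_le.2 (he₁.1 k hk1))
      · ext z
        rw [mem_filter, hiff z]
        simp only [mem_univ, true_and, mem_singleton, mem_insert]
        constructor
        · rintro (h | h)
          · exact Or.inl (scMax_unique hinj h he₁)
          · exact Or.inr (scMax_unique hinj h he₂)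
        · rintro (rfl | rfl)
          · exact Or.inl he₁
          · exact Or.inr he₂)
  refine ⟨R, hR, fun i hi => ?_⟩
  have : i ∈ R.image c' := by rw [hRc]; exact mem_univ _
  obtain ⟨x, hx, hxc⟩ := mem_image.1 this
  rcases x with t | j
  · exact ⟨t, hx, hxc⟩
  · simp only [c', Sum.elim_inr, id] at hxc
    subst hxc
    exact absurd hx hi

/-- Grid points of the simplex. -/
abbrev ScGrid (n N : ℕ) : Type := {t : Fin n → Fin (N + 1) // ∑ i, (t i : ℕ) = N}

theorem sc_grid_mk {n N : ℕ} (y : Fin n → ℕ) (h : ∑ i, y i = N) :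
    ∃ t : ScGrid n N, ∀ i, ((t.1 i : Fin (N+1)) : ℕ) = y i := by
  have hle : ∀ i, y i < N + 1 := by
    intro i
    have := Finset.single_le_sum (f := y) (fun _ _ => Nat.zero_le _) (mem_univ i)
    omega
  exact ⟨⟨fun i => ⟨y i, hle i⟩, by simpa using h⟩, fun i => rfl⟩

open Classical in
theorem sc_grid {n N : ℕ} (hn : 2 ≤ n) (c : ScGrid n N → Fin n) :
    ∃ (σ : Finset (ScGrid n N)) (C : Finset (Fin n)), σ.Nonempty ∧
      (∀ i ∈ C, ∃ t ∈ σ, c t = i) ∧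
      (∀ t ∈ σ, ∀ t' ∈ σ, ∀ i, ((t.1 i : Fin (N+1)) : ℕ) ≤ t'.1 i + n) ∧
      (∀ t ∈ σ, ∀ i ∉ C, ((t.1 i : Fin (N+1)) : ℕ) ≤ n) := by
  have : Nonempty (ScGrid n N) := by
    obtain ⟨t, -⟩ := sc_grid_mk (n := n) (N := N) (Pi.single ⟨0, by omega⟩ N) (by simp)
    exact ⟨t⟩
  set K := Fintype.card (ScGrid n N) with hK
  let idx : ScGrid n N ≃ Fin K := Fintype.equivFin _
  let r : Fin n → ScGrid n N → ℕ := fun i t => (t.1 i : ℕ) * K + idx t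
  have hmono : ∀ i t t', r i t ≤ r i t' → (t.1 i : ℕ) ≤ t'.1 i := by
    intro i t t' h
    by_contra hcon
    push Not at hcon
    have h1 : ((t'.1 i : ℕ) + 1) * K ≤ (t.1 i : ℕ) * K := Nat.mul_le_mul_right _ hcon
    have h2 := (idx t').2
    simp only [r] at h
    rw [add_mul] at h1
    omega
  have hr : ∀ i, Function.Injective (r i) := by
    intro i t t' h
    have h1 := le_antisymm (hmono i t t' h.le) (hmono i t' t h.ge)
    simp only [r] at h
    rw [h1] at h
    exact idx.injective (Fin.ext (by omega))
  have hB : ∀ i t, r i t < (N + 1) * K := by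
    intro i t
    have h1 : ((t.1 i : ℕ) + 1) * K ≤ (N + 1) * K := Nat.mul_le_mul_right _ (t.1 i).2
    have h2 := (idx t).2
    simp only [r]
    rw [add_mul] at h1
    omega
  obtain ⟨R, hR, hRc⟩ := sc_ext hn r _ hr hB c
  let σ : Finset (ScGrid n N) := univ.filter (fun t => Sum.inl t ∈ R)
  let C : Finset (Fin n) := univ.filter (fun i => Sum.inr i ∉ R)
  have hσ : ∀ t, t ∈ σ ↔ Sum.inl t ∈ R := by simp [σ]
  have hC : ∀ i, i ∈ C ↔ Sum.inr i ∉ R := by simp [C]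
  have hdom : ∀ y : ScGrid n N, ∃ i ∈ C, ∀ t ∈ σ, (y.1 i : ℕ) ≤ t.1 i := by
    intro y
    obtain ⟨i, hi⟩ := hR (Sum.inl y)
    refine ⟨i, (hC i).2 ?_, ?_⟩
    · intro h
      have := hi _ h
      simp [scExt] at this
    · intro t ht
      have := hi _ ((hσ t).1 ht)
      simp only [scExt] at this
      exact hmono i y t (by omega)
  obtain ⟨i₁, hi₁, -⟩ := hdom (Classical.arbitrary _)
  have hcol : ∀ i ∈ C, ∃ t ∈ σ, c t = i := by
    intro i hi
    obtain ⟨t, ht, hc⟩ := hRc i ((hC i).1 hi)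
    exact ⟨t, (hσ t).2 ht, hc⟩
  have hne : σ.Nonempty := by
    obtain ⟨t, ht, -⟩ := hcol i₁ hi₁
    exact ⟨t, ht⟩
  have hm : ∀ i, ∃ a ∈ σ, ∀ t ∈ σ, (a.1 i : ℕ) ≤ t.1 i :=
    fun i => σ.exists_min_image (fun t => (t.1 i : ℕ)) hne
  choose a haσ hamin using hm
  have hbig : N < ∑ i ∈ C, ((a i).1 i + 1 : ℕ) := by
    by_contra hcon
    push Not at hcon
    let y₀ : Fin n → ℕ := fun i => if i ∈ C then (a i).1 i + 1 else 0
    have hy₀ : ∑ i, y₀ i = ∑ i ∈ C, ((a i).1 i + 1 : ℕ) := by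
      simp [y₀, Finset.sum_ite_mem]
    obtain ⟨y, hy⟩ := sc_grid_mk (n := n) (N := N)
      (fun i => y₀ i + Pi.single (M := fun _ => ℕ) i₁ (N - ∑ i ∈ C, ((a i).1 i + 1 : ℕ)) i) (by
        rw [Finset.sum_add_distrib, hy₀, Finset.sum_pi_single']
        simp only [mem_univ, if_true]
        omega)
    obtain ⟨i, hiC, hi⟩ := hdom y
    have h1 := hi _ (haσ i)
    rw [hy i] at h1
    simp only [y₀, hiC, if_true] at h1
    omega
  rw [Finset.sum_add_distrib] at hbig
  simp only [sum_const, smul_eq_mul, mul_one] at hbig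
  have hCn : C.card ≤ n := by simpa using card_le_univ C
  have hin : ∀ t ∈ σ, ∀ i ∈ C, (t.1 i : ℕ) ≤ (a i).1 i + n := by
    intro t ht i hi
    have h1 : ∑ j ∈ C, (t.1 j : ℕ) ≤ N := by
      exact le_trans (Finset.sum_le_sum_of_subset (subset_univ _)) t.2.le
    rw [← Finset.add_sum_erase _ _ hi] at h1 hbig
    have h2 : ∑ j ∈ C.erase i, ((a j).1 j : ℕ) ≤ ∑ j ∈ C.erase i, (t.1 j : ℕ) :=
      Finset.sum_le_sum (fun j _ => hamin j t ht)
    omega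
  have hout : ∀ t ∈ σ, ∀ i ∉ C, (t.1 i : ℕ) ≤ n := by
    intro t ht i hi
    have h1 : ∑ j ∈ insert i C, (t.1 j : ℕ) ≤ N := by
      exact le_trans (Finset.sum_le_sum_of_subset (subset_univ _)) t.2.le
    rw [Finset.sum_insert hi] at h1
    have h2 : ∑ j ∈ C, ((a j).1 j : ℕ) ≤ ∑ j ∈ C, (t.1 j : ℕ) :=
      Finset.sum_le_sum (fun j _ => hamin j t ht)
    omega
  refine ⟨σ, C, hne, hcol, ?_, hout⟩
  intro t ht t' ht' i
  by_cases hi : i ∈ C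
  · have := hin t ht i hi
    have := hamin i t' ht'
    omega
  · have := hout t ht i hi
    omega

theorem sc_approx {n : ℕ} (hn : 2 ≤ n) (f : (Fin n → ℝ) → (Fin n → ℝ))
    (hf : ContinuousOn f (stdSimplex ℝ (Fin n)))
    (hmaps : ∀ x ∈ stdSimplex ℝ (Fin n), f x ∈ stdSimplex ℝ (Fin n)) (ε : ℝ) (hε : 0 < ε) :
    ∃ x ∈ stdSimplex ℝ (Fin n), ∀ i, x i - ε ≤ f x i := by
  have huc := (isCompact_stdSimplex ℝ (Fin n)).uniformContinuousOn_of_continuous hf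
  rw [Metric.uniformContinuousOn_iff] at huc
  obtain ⟨δ, hδ, hδf⟩ := huc (ε / 2) (by linarith)
  obtain ⟨N, hN⟩ := exists_nat_gt (n / min δ (ε / 2))
  have hmin : 0 < min δ (ε / 2) := lt_min hδ (by linarith)
  have hNpos : (0 : ℝ) < N := lt_of_le_of_lt (by positivity) hN
  have hnN : (n : ℝ) / N < min δ (ε / 2) := by
    rw [div_lt_iff₀ hmin] at hN
    rw [div_lt_iff₀ hNpos]; linarith
  have hnδ : (n : ℝ) / N < δ := hnN.trans_le (min_le_left _ _)
  have hnε : (n : ℝ) / N < ε / 2 := hnN.trans_le (min_le_right _ _)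
  let p : ScGrid n N → (Fin n → ℝ) := fun t i => ((t.1 i : ℕ) : ℝ) / N
  have hp : ∀ t, p t ∈ stdSimplex ℝ (Fin n) := by
    intro t
    refine ⟨fun i => by positivity, ?_⟩
    simp only [p]
    rw [← Finset.sum_div, ← Nat.cast_sum, t.2, div_self hNpos.ne']
  have hcol : ∀ t, ∃ i, p t i ≤ f (p t) i := by
    intro t
    by_contra hcon
    push Not at hcon
    have h1 := (hp t).2
    have h2 := (hmaps _ (hp t)).2
    have : ∑ i, f (p t) i < ∑ i, p t i :=
      Finset.sum_lt_sum_of_nonempty ⟨⟨0, by omega⟩, mem_univ _⟩ (fun i _ => hcon i)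
    linarith
  choose c hc using hcol
  obtain ⟨σ, C, ⟨t, ht⟩, hC, hclose, hout⟩ := sc_grid hn c
  refine ⟨p t, hp t, fun i => ?_⟩
  by_cases hi : i ∈ C
  · obtain ⟨t', ht', hct⟩ := hC i hi
    have hle : ∀ s ∈ σ, ∀ s' ∈ σ, ∀ j, p s j ≤ p s' j + n / N := by
      intro s hs s' hs' j
      simp only [p]
      rw [← add_div]
      gcongr
      exact_mod_cast hclose s hs s' hs' j
    have hd : dist (p t) (p t') < δ := by
      rw [dist_pi_lt_iff hδ]
      intro j
      rw [Real.dist_eq, abs_lt]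
      have := hle t ht t' ht' j
      have := hle t' ht' t ht j
      constructor <;> linarith
    have h1 := hδf _ (hp t) _ (hp t') hd
    have h2 := (dist_le_pi_dist (f (p t)) (f (p t')) i).trans_lt h1
    rw [Real.dist_eq, abs_lt] at h2
    have h3 := hc t'
    rw [hct] at h3
    have h4 := hle t ht t' ht' i
    linarith [h2.1]
  · have h1 : p t i ≤ n / N := by
      simp only [p]
      gcongr
      exact_mod_cast hout t ht i hi
    have h2 := (hmaps _ (hp t)).1 i
    linarith

/-- Brouwer's fixed point theorem on the standard simplex. -/
theorem sc_brouwer {n : ℕ} (hn : 2 ≤ n) (f : (Fin n → ℝ) → (Fin n → ℝ))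
    (hf : ContinuousOn f (stdSimplex ℝ (Fin n)))
    (hmaps : ∀ x ∈ stdSimplex ℝ (Fin n), f x ∈ stdSimplex ℝ (Fin n)) :
    ∃ x ∈ stdSimplex ℝ (Fin n), f x = x := by
  have hcont : ContinuousOn (fun x => ∑ i, max (x i - f x i) 0) (stdSimplex ℝ (Fin n)) := by
    apply continuousOn_finsetSum
    intro i _
    have h1 : ContinuousOn (fun x => f x i) (stdSimplex ℝ (Fin n)) :=
      (continuous_apply i).comp_continuousOn hf
    exact ((continuous_apply i).continuousOn.sub h1).sup continuousOn_const
  obtain ⟨x₁, hx₁, -⟩ := sc_approx hn f hf hmaps 1 one_pos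
  obtain ⟨x, hx, hmin⟩ := (isCompact_stdSimplex ℝ (Fin n)).exists_isMinOn ⟨x₁, hx₁⟩ hcont
  have hle : ∀ i, x i ≤ f x i := by
    intro i
    by_contra hcon
    push Not at hcon
    have hnpos : (0 : ℝ) < n := by exact_mod_cast (by omega : 0 < n)
    obtain ⟨z, hz, hzf⟩ := sc_approx hn f hf hmaps ((x i - f x i) / (2 * n))
      (div_pos (by linarith) (by positivity))
    have h1 : ∑ j, max (x j - f x j) 0 ≤ ∑ j, max (z j - f z j) 0 := hmin hz
    have h2 : ∑ j, max (z j - f z j) 0 ≤ ∑ _j : Fin n, (x i - f x i) / (2 * n) := by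
      apply Finset.sum_le_sum
      intro j _
      apply max_le
      · linarith [hzf j]
      · exact div_nonneg (by linarith) (by positivity)
    have h3 : x i - f x i ≤ ∑ j, max (x j - f x j) 0 :=
      (le_max_left _ _).trans (Finset.single_le_sum (f := fun j => max (x j - f x j) 0)
        (fun j _ => le_max_right _ _) (mem_univ i))
    rw [Finset.sum_const, card_univ, Fintype.card_fin, nsmul_eq_mul] at h2
    have h4 : (n : ℝ) * ((x i - f x i) / (2 * n)) = (x i - f x i) / 2 := by field_simp
    linarith
  refine ⟨x, hx, ?_⟩
  have hs : ∑ i, x i = ∑ i, f x i := by rw [hx.2, (hmaps x hx).2]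
  have := (Finset.sum_eq_sum_iff_of_le (fun i _ => hle i)).1 hs
  exact funext fun i => (this i (mem_univ i)).symm

theorem sc_brouwer' (m : ℕ) (f : (Fin (m + 1) → ℝ) → (Fin (m + 1) → ℝ))
    (hf : ContinuousOn f (stdSimplex ℝ (Fin (m + 1))))
    (hmaps : ∀ x ∈ stdSimplex ℝ (Fin (m + 1)), f x ∈ stdSimplex ℝ (Fin (m + 1))) :
    ∃ x ∈ stdSimplex ℝ (Fin (m + 1)), f x = x := by
  rcases Nat.eq_zero_or_pos m with rfl | hm
  · have h1 : (fun _ => 1 : Fin (0 + 1) → ℝ) ∈ stdSimplex ℝ (Fin (0 + 1)) :=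
      ⟨fun _ => zero_le_one, by simp⟩
    refine ⟨_, h1, ?_⟩
    have h2 := (hmaps _ h1).2
    funext i
    have hi : i = 0 := Fin.ext (by omega)
    subst hi
    simpa using h2
  · exact sc_brouwer (by omega) f hf hmaps

/-- Average over the orbit of a permutation. -/
noncomputable def scAvg {m : ℕ} (τ : Equiv.Perm (Fin (m + 1))) (y : Fin (m + 1) → ℝ) :
    Fin (m + 1) → ℝ :=
  fun α => (∑ j ∈ range (orderOf τ), y ((τ ^ j) α)) / orderOf τ

theorem scAvg_inv {m : ℕ} (τ : Equiv.Perm (Fin (m + 1))) (y : Fin (m + 1) → ℝ)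
    (α : Fin (m + 1)) : scAvg τ y (τ α) = scAvg τ y α := by
  unfold scAvg
  congr 1
  have h1 : ∀ j, y ((τ ^ j) (τ α)) = y ((τ ^ (j + 1)) α) := by
    intro j; rw [pow_succ]; rfl
  simp only [h1]
  have h2 := Finset.sum_range_succ (fun j => y ((τ ^ j) α)) (orderOf τ)
  rw [Finset.sum_range_succ' (fun j => y ((τ ^ j) α)), pow_orderOf_eq_one] at h2
  simpa using h2

theorem scAvg_eq {m : ℕ} (τ : Equiv.Perm (Fin (m + 1))) (y : Fin (m + 1) → ℝ)
    (h : ∀ α, y (τ α) = y α) : scAvg τ y = y := by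
  have h1 : ∀ j α, y ((τ ^ j) α) = y α := by
    intro j
    induction j with
    | zero => intro α; simp
    | succ k ih => intro α; rw [pow_succ, Equiv.Perm.mul_apply, ih, h]
  have hk : (orderOf τ : ℝ) ≠ 0 := by exact_mod_cast (orderOf_pos τ).ne'
  funext α
  simp only [scAvg, h1, sum_const, card_range, nsmul_eq_mul]
  field_simp

theorem scAvg_mem {m : ℕ} (τ : Equiv.Perm (Fin (m + 1))) (y : Fin (m + 1) → ℝ)
    (h : y ∈ stdSimplex ℝ (Fin (m + 1))) : scAvg τ y ∈ stdSimplex ℝ (Fin (m + 1)) := by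
  have hk : (orderOf τ : ℝ) ≠ 0 := by exact_mod_cast (orderOf_pos τ).ne'
  refine ⟨fun α => div_nonneg (Finset.sum_nonneg fun j _ => h.1 _) (Nat.cast_nonneg _), ?_⟩
  simp only [scAvg]
  rw [← Finset.sum_div, Finset.sum_comm]
  have : ∀ j, ∑ α, y ((τ ^ j) α) = 1 := by
    intro j; rw [Equiv.sum_comp (τ ^ j) y, h.2]
  simp only [this, sum_const, card_range, nsmul_eq_mul, mul_one]
  exact div_self hk

theorem scAvg_cont {m : ℕ} (τ : Equiv.Perm (Fin (m + 1))) : Continuous (scAvg τ) := by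
  unfold scAvg
  fun_prop

/-- Symmetric equilibrium proposition: under the symmetry hypothesis on the
continuous incentive `φ`, an incentive equilibrium exists in the symmetric set `U`. -/
theorem exists_incentive_equilibrium_in_symmetric_set {n : ℕ} (hn : 0 < n) (m : ℕ)
    (σ : Fin n → Equiv.Perm (Fin (m + 1)))
    (φ : (∀ i : Fin n, Fin ((fun _ : Fin n => m) i + 1) → ℝ) →
      ∀ i : Fin n, Fin ((fun _ : Fin n => m) i + 1) → ℝ)
    (hφ : IsInc φ) (hcont : Continuous φ)
    (hpos : ∀ x ∈ Δset (fun _ : Fin n => m), ∀ i α, 0 ≤ x i α + φ x i α)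
    (hsym : ∀ x ∈ {x ∈ Δset (fun _ : Fin n => m) |
        ∀ i α, x i α = x ⟨0, hn⟩ (σ i α)},
      ∀ i α, φ x ⟨0, hn⟩ (σ i α) = φ x i α) :
    ∃ x ∈ {x ∈ Δset (fun _ : Fin n => m) | ∀ i α, x i α = x ⟨0, hn⟩ (σ i α)},
      IncEq φ x := by
  let o : Fin n := ⟨0, hn⟩
  let X : (Fin (m + 1) → ℝ) → Fin n → Fin (m + 1) → ℝ := fun y i α => scAvg (σ o) y (σ i α)
  have hXo : ∀ y, X y o = scAvg (σ o) y := fun y => funext fun α => scAvg_inv _ _ _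
  have hXΔ : ∀ y ∈ stdSimplex ℝ (Fin (m + 1)), X y ∈ Δset (fun _ : Fin n => m) := by
    intro y hy
    have h := scAvg_mem (σ o) y hy
    exact ⟨fun i α => h.1 _, fun i => by
      have := Equiv.sum_comp (σ i) (scAvg (σ o) y)
      rw [h.2] at this
      exact this⟩
  have hXs : ∀ y, ∀ i α, X y i α = X y o (σ i α) := by
    intro y i α
    rw [hXo]
  have hXsym : ∀ y ∈ stdSimplex ℝ (Fin (m + 1)), ∀ i α, φ (X y) o (σ i α) = φ (X y) i α :=
    fun y hy => hsym (X y) ⟨hXΔ y hy, hXs y⟩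
  have hXc : Continuous X := by
    have := scAvg_cont (σ o)
    refine continuous_pi fun i => continuous_pi fun α => ?_
    exact (continuous_apply (σ i α)).comp this
  have hφc : ∀ β, Continuous (fun y => φ (X y) o β) := fun β =>
    (continuous_apply β).comp ((continuous_apply o).comp (hcont.comp hXc))
  let F : (Fin (m + 1) → ℝ) → (Fin (m + 1) → ℝ) := fun y α =>
    (scAvg (σ o) y α + φ (X y) o α) / (1 + ∑ β : Fin (m + 1), φ (X y) o β)
  have hne : ∀ y, 1 + ∑ β : Fin (m + 1), φ (X y) o β ≠ 0 := by
    intro y h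
    exact hφ.2 (X y) o (by
      have : ∑ β : Fin (m + 1), φ (X y) o β = -1 := by linarith
      exact this)
  have hFc : Continuous F := by
    refine continuous_pi fun α => Continuous.div ?_ ?_ hne
    · exact ((continuous_apply α).comp (scAvg_cont (σ o))).add (hφc α)
    · exact continuous_const.add (continuous_finsetSum _ fun β _ => hφc β)
  have hFm : ∀ y ∈ stdSimplex ℝ (Fin (m + 1)), F y ∈ stdSimplex ℝ (Fin (m + 1)) := by
    intro y hy
    have h0 : ∀ α : Fin (m + 1), 0 ≤ scAvg (σ o) y α + φ (X y) o α := by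
      intro α
      have := hpos (X y) (hXΔ y hy) o α
      rwa [hXo] at this
    have hs : ∑ α : Fin (m + 1), (scAvg (σ o) y α + φ (X y) o α) =
        1 + ∑ β : Fin (m + 1), φ (X y) o β := by
      rw [Finset.sum_add_distrib, (scAvg_mem (σ o) y hy).2]
    refine ⟨fun α => div_nonneg (h0 α) (hs ▸ Finset.sum_nonneg fun α _ => h0 α), ?_⟩
    simp only [F]
    rw [← Finset.sum_div, hs, div_self (hne y)]
  obtain ⟨y, hy, hFy⟩ := sc_brouwer' m F hFc.continuousOn hFm
  have hinv : ∀ α, y (σ o α) = y α := by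
    intro α
    rw [← hFy]
    simp only [F]
    rw [scAvg_inv, hXsym y hy o α]
  have havg := scAvg_eq (σ o) y hinv
  have heq : ∀ α : Fin (m + 1), φ (X y) o α = y α * ∑ β : Fin (m + 1), φ (X y) o β := by
    intro α
    have h1 : F y α = y α := by rw [hFy]
    simp only [F] at h1
    rw [div_eq_iff (hne y), havg] at h1
    linarith
  refine ⟨X y, ⟨hXΔ y hy, hXs y⟩, fun i α => ?_⟩
  have hsum : ∑ β : Fin (m + 1), φ (X y) i β = ∑ β : Fin (m + 1), φ (X y) o β := by
    rw [← Equiv.sum_comp (σ i) (φ (X y) o)]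
    exact Finset.sum_congr rfl fun β _ => (hXsym y hy i β).symm
  have hx : X y i α = y (σ i α) := by simp only [X]; rw [havg]
  rw [← hXsym y hy i α, heq, hx]
  exact congrArg _ hsum.symm
end

section
/- (Nash's theorem, as a corollary of the main theorem applied to the Nash incentive.) Every finite game has a Nash equilibrium: there exists x̂ ∈ Δ such that u_i(x̂) = max_{α ∈ S_i} u_i(e_{iα}, x̂_{-i}) for every player i. -/
open Finset

section Scarf
open Classical

/-- `σ` is dominant for the family of orders given by `r`. -/
def ScarfDom {V I L : Type*} [LinearOrder L] (r : I → V → L) (σ : Finset V) : Prop :=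
  ∀ y, ∃ i, ∀ x ∈ σ, r i y ≤ r i x

/-- Every nonslack-containing door lies in exactly two rooms. -/
lemma scarf_two {V I L : Type*} [Fintype V] [Fintype I] [LinearOrder L]
    (r : I → V → L) (hr : ∀ i, Function.Injective (r i)) (s : I → V)
    (hs : ∀ i v, v ≠ s i → r i (s i) < r i v)
    (hs2 : ∀ i j v, j ≠ i → (∀ l, v ≠ s l) → r i v < r i (s j))
    (τ : Finset V) (hτ : ScarfDom r τ) (hc : τ.card + 1 = Fintype.card I)
    (t : V) (ht : t ∈ τ) (hts : ∀ l, t ≠ s l) :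
    ((univ : Finset (Finset V)).filter (fun σ =>
      (ScarfDom r σ ∧ σ.card = Fintype.card I) ∧ τ ⊆ σ)).card = 2 := by
  have hm : ∀ i, ∃ m ∈ τ, ∀ x ∈ τ, r i m ≤ r i x := fun i =>
    τ.exists_min_image (r i) ⟨t, ht⟩
  choose m hmτ hmin using hm
  -- surjectivity of the minimum map
  have hsurj : ∀ x ∈ τ, ∃ i, m i = x := by
    intro x hx
    obtain ⟨i, hi⟩ := hτ x
    exact ⟨i, hr i (le_antisymm (hmin i x hx) (hi _ (hmτ i)))⟩
  -- the colliding pair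
  obtain ⟨i, j, hij, hmij⟩ : ∃ i j, i ≠ j ∧ m i = m j := by
    obtain ⟨i, -, j, -, h, h'⟩ := Finset.exists_ne_map_eq_of_card_lt_of_maps_to
      (s := (univ : Finset I)) (t := τ) (f := m) (by rw [Finset.card_univ]; omega)
      (fun i _ => hmτ i)
    exact ⟨i, j, h, h'⟩
  have himg : (univ.erase i).image m = τ := by
    ext x
    simp only [mem_image, mem_erase, mem_univ, and_true]
    constructor
    · rintro ⟨l, -, rfl⟩; exact hmτ l
    · intro hx
      obtain ⟨l, rfl⟩ := hsurj x hx
      by_cases h : l = i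
      · exact ⟨j, hij.symm, by rw [h, hmij]⟩
      · exact ⟨l, h, rfl⟩
  have hinj : Set.InjOn m (univ.erase i : Finset I) := by
    apply Finset.card_image_iff.mp
    rw [himg, Finset.card_erase_of_mem (mem_univ _), Finset.card_univ]; omega
  -- any collision is among i, j
  have hcoll : ∀ k l, k ≠ l → m k = m l → k = i ∨ k = j := by
    intro k l hkl h
    by_contra hcon
    push Not at hcon
    by_cases hl : l = i
    · subst hl
      exact hcon.2 (hinj (by simp [hcon.1]) (by simp [hij.symm]) (h.trans hmij))
    · exact hkl (hinj (by simp [hcon.1]) (by simp [hl]) h)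
  -- the new vertex attached to an index
  have key : ∀ k l, k ≠ l → m k = m l → ∃ x, (∀ l, l ≠ k → r l (m l) < r l x) ∧
      ∀ y, (∀ l, l ≠ k → r l (m l) < r l y) → r k y ≤ r k x := by
    intro k k' hkk hkm
    have hsk : s k ∉ τ := by
      intro h
      have h1 : m k = s k := by
        by_contra hne
        exact absurd (hmin k _ h) (not_le.mpr (hs k _ hne))
      have h2 := hmin k' t ht
      rw [← hkm, h1] at h2
      exact absurd h2 (not_le.mpr (hs2 k' k t hkk hts))
    obtain ⟨x, hx, hx'⟩ := (univ.filter (fun y => ∀ l, l ≠ k → r l (m l) < r l y)).exists_max_image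
      (r k) ⟨s k, by
        simp only [mem_filter, mem_univ, true_and]
        intro l hl
        exact lt_of_le_of_lt (hmin l t ht) (hs2 l k t hl.symm hts)⟩
    simp only [mem_filter, mem_univ, true_and] at hx hx'
    exact ⟨x, hx, hx'⟩
  have hlow : ∀ x k, (∀ l, l ≠ k → r l (m l) < r l x) → r k x ≤ r k (m k) := by
    intro x k hx
    obtain ⟨l, hl⟩ := hτ x
    by_cases h : l = k
    · subst h; exact hl _ (hmτ l)
    · exact absurd (hl _ (hmτ l)) (not_le.mpr (hx l h))
  have hnot : ∀ x k l, k ≠ l → m k = m l → (∀ l, l ≠ k → r l (m l) < r l x) → x ∉ τ := by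
    intro x k l hkl hm1 hx hxτ
    have h1 := hr k (le_antisymm (hlow x k hx) (hmin k x hxτ))
    have h2 := hx l hkl.symm
    rw [h1, hm1] at h2
    exact lt_irrefl _ h2
  obtain ⟨a, ha, ha'⟩ := key i j hij hmij
  obtain ⟨b, hb, hb'⟩ := key j i hij.symm hmij.symm
  have haτ := hnot a i j hij hmij ha
  have hbτ := hnot b j i hij.symm hmij.symm hb
  have hroom : ∀ x k, x ∉ τ → (∀ l, l ≠ k → r l (m l) < r l x) →
      (∀ y, (∀ l, l ≠ k → r l (m l) < r l y) → r k y ≤ r k x) →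
      ScarfDom r (insert x τ) ∧ (insert x τ).card = Fintype.card I := by
    intro x k hxτ hx hx'
    refine ⟨?_, by rw [card_insert_of_notMem hxτ, hc]⟩
    intro y
    by_cases hy : ∀ l, l ≠ k → r l (m l) < r l y
    · refine ⟨k, ?_⟩
      intro z hz
      rcases mem_insert.mp hz with rfl | hz
      · exact hx' y hy
      · exact (hlow y k hy).trans (hmin k z hz)
    · push Not at hy
      obtain ⟨l, hl, hyl⟩ := hy
      refine ⟨l, ?_⟩
      intro z hz
      rcases mem_insert.mp hz with rfl | hz
      · exact hyl.trans (hx l hl).le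
      · exact hyl.trans (hmin l z hz)
  rw [Finset.card_eq_two]
  refine ⟨insert a τ, insert b τ, ?_, ?_⟩
  · intro h
    have hab : a = b := by
      have : a ∈ insert b τ := h ▸ mem_insert_self a τ
      exact (mem_insert.mp this).resolve_right haτ
    subst hab
    have h1 := hb i hij
    exact absurd (hlow a i ha) (not_le.mpr h1)
  · ext σ
    simp only [mem_filter, mem_univ, true_and, mem_insert, mem_singleton]
    constructor
    · rintro ⟨⟨hd, hcard⟩, hsub⟩
      obtain ⟨x, hxτ, rfl⟩ : ∃ x, x ∉ τ ∧ insert x τ = σ := by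
        have : (σ \ τ).card = 1 := by rw [card_sdiff_of_subset hsub]; omega
        obtain ⟨x, hx⟩ := card_eq_one.mp this
        have hx1 : x ∈ σ \ τ := by rw [hx]; simp
        refine ⟨x, (mem_sdiff.mp hx1).2, ?_⟩
        rw [insert_eq, ← hx, sdiff_union_of_subset hsub]
      -- x minimal for some k
      obtain ⟨k, hk⟩ := hd x
      have hkτ : ∀ z ∈ τ, r k x ≤ r k z := fun z hz => hk z (mem_insert_of_mem hz)
      -- each element of τ is minimal for some index
      have hg : ∀ z ∈ τ, ∃ l, l ≠ k ∧ m l = z ∧ r l z < r l x := by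
        intro z hz
        obtain ⟨l, hl⟩ := hd z
        have hzx : z ≠ x := fun h => hxτ (h ▸ hz)
        refine ⟨l, ?_, ?_, ?_⟩
        · rintro rfl
          exact hzx (hr l (le_antisymm (hl x (mem_insert_self _ _)) (hkτ z hz)))
        · exact hr l (le_antisymm (hmin l z hz) (hl _ (mem_insert_of_mem (hmτ l))))
        · exact lt_of_le_of_ne (hl x (mem_insert_self _ _)) (fun h => hzx (hr l h))
      obtain ⟨l0, hl0, hl0m, -⟩ := hg (m k) (hmτ k)
      have himgk : ((univ.filter (fun l => l ≠ k ∧ r l (m l) < r l x)).image m) = τ := by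
        ext z
        simp only [mem_image, mem_filter, mem_univ, true_and]
        constructor
        · rintro ⟨l, -, rfl⟩; exact hmτ l
        · intro hz
          obtain ⟨l, h1, h2, h3⟩ := hg z hz
          exact ⟨l, ⟨h1, by rwa [h2]⟩, h2⟩
      have hall : univ.filter (fun l => l ≠ k ∧ r l (m l) < r l x) = univ.erase k := by
        apply Finset.eq_of_subset_of_card_le
        · intro l; simp; tauto
        · rw [Finset.card_erase_of_mem (mem_univ _), Finset.card_univ, ← hc, Nat.add_sub_cancel]
          conv_lhs => rw [← himgk]
          exact card_image_le
      have hx : ∀ l, l ≠ k → r l (m l) < r l x := by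
        intro l hl
        have : l ∈ univ.erase k := by simp [hl]
        rw [← hall] at this
        simp only [mem_filter] at this
        exact this.2.2
      have hxmax : ∀ y, (∀ l, l ≠ k → r l (m l) < r l y) → r k y ≤ r k x := by
        intro y hy
        obtain ⟨l, hl⟩ := hd y
        by_cases h : l = k
        · subst h; exact hl x (mem_insert_self _ _)
        · exact absurd (hl _ (mem_insert_of_mem (hmτ l))) (not_le.mpr (hy l h))
      rcases hcoll k l0 hl0.symm hl0m.symm with rfl | rfl
      · left
        rw [hr k (le_antisymm (hxmax a ha) (ha' x hx))]
      · right
        rw [hr k (le_antisymm (hxmax b hb) (hb' x hx))]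
    · rintro (rfl | rfl)
      · exact ⟨hroom a i haτ ha ha', subset_insert _ _⟩
      · exact ⟨hroom b j hbτ hb hb', subset_insert _ _⟩

lemma scarf_one {V I L : Type*} [Fintype V] [Fintype I] [LinearOrder L]
    (r : I → V → L) (hr : ∀ i, Function.Injective (r i)) (s : I → V)
    (hsi : Function.Injective s)
    (hs : ∀ i v, v ≠ s i → r i (s i) < r i v)
    (hs2 : ∀ i j v, j ≠ i → (∀ l, v ≠ s l) → r i v < r i (s j))
    (t : V) (hts : ∀ l, t ≠ s l) (i0 : I) :
    ((univ : Finset (Finset V)).filter (fun σ =>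
      (ScarfDom r σ ∧ σ.card = Fintype.card I) ∧ (univ.erase i0).image s ⊆ σ)).card = 1 := by
  set τ := (univ.erase i0).image s with hτ
  have hmem : ∀ v, v ∉ τ → v ≠ s i0 → ∀ l, v ≠ s l := by
    intro v hv hv0 l hl
    by_cases h : l = i0
    · exact hv0 (h ▸ hl)
    · exact hv (by rw [hτ, hl]; exact mem_image_of_mem _ (by simp [h]))
  have hsτ : ∀ l, l ≠ i0 → s l ∈ τ := fun l hl => mem_image_of_mem _ (by simp [hl])
  have hcard : τ.card + 1 = Fintype.card I := by
    rw [hτ, card_image_of_injective _ hsi, card_erase_of_mem (mem_univ _), card_univ]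
    have := Fintype.card_pos_iff.mpr ⟨i0⟩
    omega
  have htτ : ∀ v, (∀ l, v ≠ s l) → v ∉ τ := by
    intro v hv h
    obtain ⟨l, -, hl⟩ := mem_image.mp h
    exact hv l hl.symm
  have hs0 : s i0 ∉ τ := by
    intro h
    obtain ⟨l, hl, hl'⟩ := mem_image.mp h
    simp at hl
    exact hl (hsi hl')
  obtain ⟨a, ha, hmax⟩ := (univ.filter (fun v => ∀ l, v ≠ s l)).exists_max_image (r i0)
    ⟨t, by simpa using hts⟩
  simp only [mem_filter, mem_univ, true_and] at ha hmax
  -- for y not slack, the index in dominance must be i0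
  have hidx : ∀ σ : Finset V, τ ⊆ σ → ∀ y, (∀ l, y ≠ s l) → ∀ i, (∀ x ∈ σ, r i y ≤ r i x) →
      i = i0 := by
    intro σ hσ y hy i hi
    by_contra h
    exact absurd (hi _ (hσ (hsτ i h))) (not_le.mpr (hs i y (hy i)))
  rw [card_eq_one]
  refine ⟨insert a τ, ?_⟩
  ext σ
  simp only [mem_filter, mem_univ, true_and, mem_singleton]
  constructor
  · rintro ⟨⟨hd, hcσ⟩, hsub⟩
    obtain ⟨x, hxτ, rfl⟩ : ∃ x, x ∉ τ ∧ insert x τ = σ := by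
      have : (σ \ τ).card = 1 := by rw [card_sdiff_of_subset hsub]; omega
      obtain ⟨x, hx⟩ := card_eq_one.mp this
      have hx1 : x ∈ σ \ τ := by rw [hx]; simp
      refine ⟨x, (mem_sdiff.mp hx1).2, ?_⟩
      rw [insert_eq, ← hx, sdiff_union_of_subset hsub]
    obtain ⟨i, hi⟩ := hd a
    have := hidx _ hsub a ha i hi
    subst this
    have hax := hi x (mem_insert_self _ _)
    have hx0 : x ≠ s i := by
      rintro rfl
      exact absurd hax (not_le.mpr (hs i a (ha i)))
    rw [hr i (le_antisymm hax (hmax x (hmem x hxτ hx0)))]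
  · rintro rfl
    refine ⟨⟨?_, by rw [card_insert_of_notMem (htτ a ha), hcard]⟩, subset_insert _ _⟩
    intro y
    by_cases hy : ∀ l, y ≠ s l
    · refine ⟨i0, fun x hx => ?_⟩
      rcases mem_insert.mp hx with rfl | hx
      · exact hmax y hy
      · obtain ⟨l, hl, rfl⟩ := mem_image.mp hx
        have hli : l ≠ i0 := by simpa using hl
        exact (hs2 i0 l y hli hy).le
    · push Not at hy
      obtain ⟨l, rfl⟩ := hy
      refine ⟨l, fun x _ => ?_⟩
      by_cases h : x = s l
      · rw [h]
      · exact (hs l x h).le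

lemma scarf_even {V I : Type*} [Fintype V] [Fintype I] (P : Finset V → Prop)
    (hP : ∀ σ τ, P σ → τ ⊆ σ → P τ) (c : V → I) (i0 : I) (σ : Finset V) (hσ : P σ)
    (hcard : σ.card = Fintype.card I) (hne : σ.image c ≠ univ) :
    Even ((univ : Finset (Finset V)).filter (fun τ =>
      (P τ ∧ τ.card + 1 = Fintype.card I ∧ τ.image c = univ.erase i0) ∧ τ ⊆ σ)).card := by
  rcases Finset.eq_empty_or_nonempty ((univ : Finset (Finset V)).filter (fun τ =>
      (P τ ∧ τ.card + 1 = Fintype.card I ∧ τ.image c = univ.erase i0) ∧ τ ⊆ σ)) with h0 | ⟨τ, hτ⟩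
  · rw [h0]; simp
  have hinj : ∀ τ : Finset V, τ.card + 1 = Fintype.card I → τ.image c = univ.erase i0 →
      Set.InjOn c τ := by
    intro τ h1 h2
    apply card_image_iff.mp
    rw [h2, card_erase_of_mem (mem_univ _), card_univ]; omega
  have hext : ∀ τ : Finset V, τ.card + 1 = Fintype.card I → τ ⊆ σ →
      ∃ x, x ∉ τ ∧ insert x τ = σ := by
    intro τ h1 hsub
    have : (σ \ τ).card = 1 := by rw [card_sdiff_of_subset hsub]; omega
    obtain ⟨x, hx⟩ := card_eq_one.mp this
    have hx1 : x ∈ σ \ τ := by rw [hx]; simp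
    refine ⟨x, (mem_sdiff.mp hx1).2, ?_⟩
    rw [insert_eq, ← hx, sdiff_union_of_subset hsub]
  simp only [mem_filter, mem_univ, true_and] at hτ
  obtain ⟨⟨hPτ, hcτ, himg⟩, hsub⟩ := hτ
  obtain ⟨x, hxτ, hxσ⟩ := hext τ hcτ hsub
  have hcx : c x ≠ i0 := by
    intro h
    apply hne
    rw [← hxσ, image_insert, himg, h, insert_erase (mem_univ _)]
  have : c x ∈ τ.image c := by rw [himg]; simp [hcx]
  obtain ⟨x', hx'τ, hxx'⟩ := mem_image.mp this
  have hxne : x' ≠ x := fun h => hxτ (h ▸ hx'τ)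
  have hxmem : x ∈ σ := hxσ ▸ mem_insert_self _ _
  have hx'mem : x' ∈ σ := hsub hx'τ
  have hτeq : τ = σ.erase x := by rw [← hxσ, erase_insert hxτ]
  have : (univ : Finset (Finset V)).filter (fun τ =>
      (P τ ∧ τ.card + 1 = Fintype.card I ∧ τ.image c = univ.erase i0) ∧ τ ⊆ σ)
      = {σ.erase x, σ.erase x'} := by
    ext ρ
    simp only [mem_filter, mem_univ, true_and, mem_insert, mem_singleton]
    constructor
    · rintro ⟨⟨-, h1, h2⟩, h3⟩
      obtain ⟨z, hz, hzσ⟩ := hext ρ h1 h3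
      have hρ : ρ = σ.erase z := by rw [← hzσ, erase_insert hz]
      by_cases hzx : z = x
      · left; rw [hρ, hzx]
      by_cases hzx' : z = x'
      · right; rw [hρ, hzx']
      exfalso
      apply hxne
      apply hinj ρ h1 h2 _ _ hxx'
      · rw [hρ]; simp [hx'mem, Ne.symm hzx']
      · rw [hρ]; simp [hxmem, Ne.symm hzx]
    · rintro (rfl | rfl)
      · rw [← hτeq]; exact ⟨⟨hPτ, hcτ, himg⟩, hsub⟩
      · refine ⟨⟨hP _ _ hσ (erase_subset _ _), ?_, ?_⟩, erase_subset _ _⟩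
        · rw [card_erase_of_mem hx'mem, ← hcard]
          have := card_pos.mpr ⟨x, hxmem⟩
          omega
        · rw [← himg]
          ext k
          simp only [mem_image]
          constructor
          · rintro ⟨v, hv, rfl⟩
            obtain ⟨hv1, hv2⟩ := mem_erase.mp hv
            rw [← hxσ] at hv2
            rcases mem_insert.mp hv2 with rfl | h
            · exact ⟨x', hx'τ, hxx'⟩
            · exact ⟨v, h, rfl⟩
          · rintro ⟨v, hv, rfl⟩
            by_cases h : v = x'
            · exact ⟨x, mem_erase.mpr ⟨hxne.symm, hxmem⟩, by rw [h, hxx']⟩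
            · exact ⟨v, mem_erase.mpr ⟨h, hsub hv⟩, rfl⟩
  rw [this, card_pair]
  · exact even_two
  · intro h
    have : x ∈ σ.erase x' := by simp [hxmem, hxne.symm]
    rw [← h] at this
    simp at this

/-- Scarf's combinatorial lemma. -/
theorem scarf {V I L : Type*} [Fintype V] [Fintype I] [LinearOrder L]
    (r : I → V → L) (hr : ∀ i, Function.Injective (r i)) (s : I → V)
    (hsi : Function.Injective s)
    (hs : ∀ i v, v ≠ s i → r i (s i) < r i v)
    (hs2 : ∀ i j v, j ≠ i → (∀ l, v ≠ s l) → r i v < r i (s j))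
    (t : V) (hts : ∀ l, t ≠ s l) (i0 : I) (c : V → I) (hcs : ∀ i, c (s i) = i) :
    ∃ σ : Finset V, ScarfDom r σ ∧ σ.card = Fintype.card I ∧ σ.image c = univ := by
  by_contra hcon
  push Not at hcon
  let R : Finset (Finset V) := univ.filter (fun σ => ScarfDom r σ ∧ σ.card = Fintype.card I)
  let D : Finset (Finset V) := univ.filter (fun τ => ScarfDom r τ ∧ τ.card + 1 = Fintype.card I ∧
    τ.image c = univ.erase i0)
  have hcount := Finset.sum_card_bipartiteAbove_eq_sum_card_bipartiteBelow
    (s := D) (t := R) (fun τ σ : Finset V => τ ⊆ σ)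
  have hmono : ∀ σ τ : Finset V, ScarfDom r σ → τ ⊆ σ → ScarfDom r τ := by
    intro σ τ h hsub y
    obtain ⟨i, hi⟩ := h y
    exact ⟨i, fun x hx => hi x (hsub hx)⟩
  have hright : Even (∑ σ ∈ R, (bipartiteBelow (fun τ σ : Finset V => τ ⊆ σ) D σ).card) := by
    apply Finset.even_sum
    intro σ hσ
    simp only [R, mem_filter, mem_univ, true_and] at hσ
    have := scarf_even (ScarfDom r) hmono c i0 σ hσ.1 hσ.2 (hcon σ hσ.1 hσ.2)
    simpa only [bipartiteBelow, D, filter_filter] using this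
  set τ0 := (univ.erase i0).image s with hτ0
  have hone := scarf_one r hr s hsi hs hs2 t hts i0
  have h0D : τ0 ∈ D := by
    obtain ⟨σ, hσ⟩ := card_pos.mp (by rw [hone]; exact one_pos)
    simp only [mem_filter, mem_univ, true_and] at hσ
    simp only [D, mem_filter, mem_univ, true_and]
    refine ⟨hmono _ _ hσ.1.1 hσ.2, ?_, ?_⟩
    · rw [hτ0, card_image_of_injective _ hsi, card_erase_of_mem (mem_univ _), card_univ]
      have := Fintype.card_pos_iff.mpr ⟨i0⟩
      omega
    · rw [hτ0, image_image]
      have : c ∘ s = id := funext hcs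
      rw [this, image_id]
  rw [← hcount, ← Finset.add_sum_erase D _ h0D] at hright
  have h1 : (bipartiteAbove (fun τ σ : Finset V => τ ⊆ σ) R τ0).card = 1 := by
    simpa only [bipartiteAbove, R, filter_filter] using hone
  have h2 : Even (∑ τ ∈ D.erase τ0, (bipartiteAbove (fun τ σ : Finset V => τ ⊆ σ) R τ).card) := by
    apply Finset.even_sum
    intro τ hτ
    obtain ⟨hne, hτ⟩ := mem_erase.mp hτ
    simp only [D, mem_filter, mem_univ, true_and] at hτ
    have : ∃ t' ∈ τ, ∀ l, t' ≠ s l := by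
      by_contra hno
      push Not at hno
      apply hne
      apply Finset.eq_of_subset_of_card_le
      · intro v hv
        obtain ⟨l, rfl⟩ := hno v hv
        apply mem_image_of_mem
        rw [← hτ.2.2]
        exact mem_image.mpr ⟨s l, hv, hcs l⟩
      · rw [hτ0, card_image_of_injective _ hsi, ← hτ.2.2]
        exact card_image_le
    obtain ⟨t', ht', hts'⟩ := this
    have := scarf_two r hr s hs hs2 τ hτ.1 hτ.2.1 t' ht' hts'
    have h3 : (bipartiteAbove (fun τ σ : Finset V => τ ⊆ σ) R τ).card = 2 := by
      simpa only [bipartiteAbove, R, filter_filter] using this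
    rw [h3]; exact even_two
  rw [h1] at hright
  rw [Nat.even_add] at hright
  exact absurd (hright.mpr h2) (by decide)

end Scarf

section Brouwer
open Classical

lemma grid_lemma {I : Type*} [Fintype I] (i0 : I) (k : ℕ)
    (c : {x : I → Fin (k+1) // ∑ i, (x i : ℕ) = k} → I) :
    ∃ z : {x : I → Fin (k+1) // ∑ i, (x i : ℕ) = k}, ∀ i,
      (z.1 i : ℕ) ≤ Fintype.card I ∨ ∃ x, c x = i ∧
        ∀ j, (x.1 j : ℕ) ≤ z.1 j + Fintype.card I ∧ (z.1 j : ℕ) ≤ x.1 j + Fintype.card I := by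
  let T := {x : I → Fin (k+1) // ∑ i, (x i : ℕ) = k}
  let mk : ∀ y : I → ℕ, ∑ i, y i = k → T := fun y hy =>
    ⟨fun i => ⟨y i, Nat.lt_succ_of_le (hy ▸ Finset.single_le_sum (f := y)
      (fun _ _ => Nat.zero_le _) (mem_univ i))⟩, hy⟩
  let e : T ⊕ I → ℕ := fun v => (Fintype.equivFin (T ⊕ I) v : ℕ)
  have he : Function.Injective e := fun a b h =>
    (Fintype.equivFin (T ⊕ I)).injective (Fin.ext h)
  let a : I → T ⊕ I → ℕ := fun i v =>
    Sum.elim (fun x : T => (x.1 i : ℕ) + 1) (fun j => if j = i then 0 else k + 2) v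
  let r : I → T ⊕ I → ℕ ×ₗ ℕ := fun i v => toLex (a i v, e v)
  have hlt : ∀ i v w, a i v < a i w → r i v < r i w := by
    intro i v w h
    exact Prod.Lex.toLex_lt_toLex.mpr (Or.inl h)
  have hle : ∀ i v w, r i v ≤ r i w → a i v ≤ a i w := by
    intro i v w h
    by_contra h'
    exact absurd h (not_le.mpr (hlt i w v (not_le.mp h')))
  have t0 : T := mk (fun i => if i = i0 then k else 0) (by simp)
  obtain ⟨σ, hdom, -, himg⟩ := scarf (V := T ⊕ I) r
    (by
      intro i v w h
      have : (a i v, e v) = (a i w, e w) := toLex.injective h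
      exact he (Prod.ext_iff.mp this).2)
    Sum.inr Sum.inr_injective
    (by
      intro i v hv
      apply hlt
      rcases v with x | j
      · simp [a]
      · have : j ≠ i := fun h => hv (by rw [h])
        simp [a, this])
    (by
      intro i j v hij hv
      apply hlt
      rcases v with x | l
      · have := (x.1 i).2
        simp only [a, Sum.elim_inl, Sum.elim_inr, if_neg hij]
        omega
      · exact absurd rfl (hv l))
    (Sum.inl t0) (by simp) i0 (Sum.elim c id) (by simp)
  -- C : indices whose slack is not in σ
  have hcol : ∀ i, Sum.inr i ∉ σ → ∃ x : T, Sum.inl x ∈ σ ∧ c x = i := by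
    intro i hi
    have : i ∈ σ.image (Sum.elim c id) := by rw [himg]; exact mem_univ _
    obtain ⟨v, hv, hvi⟩ := mem_image.mp this
    rcases v with x | j
    · exact ⟨x, hv, hvi⟩
    · simp at hvi; subst hvi; exact absurd hv hi
  obtain ⟨i1, hi1⟩ : ∃ i, Sum.inr i ∉ σ := by
    obtain ⟨i, hi⟩ := hdom (Sum.inl t0)
    refine ⟨i, fun h => ?_⟩
    have := hle _ _ _ (hi _ h)
    simp [a] at this
  obtain ⟨z, hzσ, -⟩ := hcol i1 hi1
  let S : Finset T := univ.filter (fun x => Sum.inl x ∈ σ)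
  have hS : S.Nonempty := ⟨z, by simp [S, hzσ]⟩
  have hm : ∀ i, ∃ m ∈ S, ∀ x ∈ S, (m.1 i : ℕ) ≤ x.1 i := fun i =>
    S.exists_min_image (fun x => (x.1 i : ℕ)) hS
  choose m hmS hmin using hm
  let C : Finset I := univ.filter (fun i => Sum.inr i ∉ σ)
  have hi1C : i1 ∈ C := by simp [C, hi1]
  have hsum : k < ∑ i ∈ C, ((m i).1 i + 1 : ℕ) := by
    by_contra hcon
    push Not at hcon
    let y : I → ℕ := fun i => (if i ∈ C then ((m i).1 i + 1 : ℕ) else 0) +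
      (if i = i1 then k - ∑ i ∈ C, ((m i).1 i + 1 : ℕ) else 0)
    have hy : ∑ i, y i = k := by
      simp only [y, sum_add_distrib, sum_ite_mem, univ_inter, sum_ite_eq', mem_univ, if_true]
      rw [← sum_add_distrib]
      omega
    obtain ⟨i, hi⟩ := hdom (Sum.inl (mk y hy))
    have hiC : Sum.inr i ∉ σ := by
      intro h
      have := hle _ _ _ (hi _ h)
      simp [a] at this
    have h1 := hmS i
    simp only [S, mem_filter, mem_univ, true_and] at h1
    have h2 := hle _ _ _ (hi _ h1)
    simp only [a, Sum.elim_inl, mk, y] at h2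
    have : i ∈ C := by simp [C, hiC]
    rw [if_pos this] at h2
    omega
  have hCcard : C.card ≤ Fintype.card I := card_le_univ C
  have hbound : ∀ x ∈ S, ∀ j, (j ∈ C → (x.1 j : ℕ) ≤ (m j).1 j + Fintype.card I) ∧
      (j ∉ C → (x.1 j : ℕ) ≤ Fintype.card I) := by
    intro x hx j
    rw [sum_add_distrib, sum_const, smul_eq_mul, mul_one] at hsum
    have hxk := x.2
    rw [← Finset.sum_add_sum_compl C] at hxk
    constructor
    · intro hj
      rw [← Finset.add_sum_erase C _ hj] at hsum hxk
      have : ∑ i ∈ C.erase j, ((m i).1 i : ℕ) ≤ ∑ i ∈ C.erase j, (x.1 i : ℕ) :=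
        sum_le_sum (fun i _ => hmin i x hx)
      omega
    · intro hj
      have : ∑ i ∈ C, ((m i).1 i : ℕ) ≤ ∑ i ∈ C, (x.1 i : ℕ) :=
        sum_le_sum (fun i _ => hmin i x hx)
      have h3 : (x.1 j : ℕ) ≤ ∑ i ∈ Cᶜ, (x.1 i : ℕ) :=
        Finset.single_le_sum (f := fun i => (x.1 i : ℕ)) (fun _ _ => Nat.zero_le _)
          (mem_compl.mpr hj)
      omega
  have hzS : z ∈ S := by simp [S, hzσ]
  refine ⟨z, fun i => ?_⟩
  by_cases hi : i ∈ C
  · right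
    obtain ⟨x, hx, hxc⟩ := hcol i (by simpa [C] using hi)
    have hxS : x ∈ S := by simp [S, hx]
    refine ⟨x, hxc, fun j => ?_⟩
    have h1 := hbound x hxS j
    have h2 := hbound z hzS j
    have h3 := hmin j x hxS
    have h4 := hmin j z hzS
    by_cases hj : j ∈ C
    · have := h1.1 hj
      have := h2.1 hj
      omega
    · have := h1.2 hj
      have := h2.2 hj
      omega
  · left
    exact (hbound z hzS i).2 hi

/-- Approximate version. -/
lemma approx_lemma {I : Type*} [Fintype I] (i0 : I) (f : (I → ℝ) → I → ℝ)
    (hf : ∀ x ∈ stdSimplex ℝ I, f x ∈ stdSimplex ℝ I) (ε : ℝ) (hε : 0 < ε) :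
    ∃ z ∈ stdSimplex ℝ I, ∀ i, z i ≤ ε ∨
      ∃ x, dist x z ≤ ε ∧ x i ≤ f x i := by
  obtain ⟨k, hk⟩ := exists_nat_gt ((Fintype.card I : ℝ) / ε)
  have hk0 : (0 : ℝ) < k := lt_of_le_of_lt (by positivity) hk
  have hkε : (Fintype.card I : ℝ) / k ≤ ε := by
    rw [div_lt_iff₀ hε] at hk
    rw [div_le_iff₀ hk0]; linarith
  let p : {x : I → Fin (k+1) // ∑ i, (x i : ℕ) = k} → I → ℝ := fun x i => ((x.1 i : ℕ) : ℝ) / k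
  have hp : ∀ x, p x ∈ stdSimplex ℝ I := by
    intro x
    refine ⟨fun i => by positivity, ?_⟩
    simp only [p]
    rw [← Finset.sum_div, ← Nat.cast_sum, x.2, div_self hk0.ne']
  have hc : ∀ x, ∃ i, p x i ≤ f (p x) i := by
    intro x
    by_contra hcon
    push Not at hcon
    have := Finset.sum_lt_sum_of_nonempty (s := univ) ⟨i0, mem_univ i0⟩ (fun i _ => hcon i)
    rw [(hf _ (hp x)).2, (hp x).2] at this
    exact lt_irrefl _ this
  choose c hc using hc
  obtain ⟨z, hz⟩ := grid_lemma i0 k c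
  refine ⟨p z, hp z, fun i => ?_⟩
  rcases hz i with h | ⟨x, hx, hxz⟩
  · left
    refine le_trans ?_ hkε
    simp only [p]
    gcongr
  · right
    refine ⟨p x, ?_, hx ▸ hc x⟩
    rw [dist_pi_le_iff hε.le]
    intro j
    refine le_trans ?_ hkε
    rw [Real.dist_eq]
    simp only [p]
    rw [← sub_div, abs_div, abs_of_pos hk0]
    gcongr
    obtain ⟨h1, h2⟩ := hxz j
    have h1' : ((x.1 j : ℕ) : ℝ) ≤ (z.1 j : ℕ) + Fintype.card I := by exact_mod_cast h1
    have h2' : ((z.1 j : ℕ) : ℝ) ≤ (x.1 j : ℕ) + Fintype.card I := by exact_mod_cast h2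
    rw [abs_le]; constructor <;> linarith

/-- Brouwer's fixed point theorem on a simplex. -/
theorem brouwer_simplex {I : Type*} [Fintype I] (i0 : I) (f : (I → ℝ) → I → ℝ)
    (hcont : Continuous f)
    (hf : ∀ x ∈ stdSimplex ℝ I, f x ∈ stdSimplex ℝ I) :
    ∃ z ∈ stdSimplex ℝ I, f z = z := by
  have hA := fun n : ℕ => approx_lemma i0 f hf (1 / ((n : ℝ) + 1)) Nat.one_div_pos_of_nat
  choose z hz hzi using hA
  obtain ⟨w, hw, φ, hφ, hlim⟩ := (isCompact_stdSimplex ℝ I).tendsto_subseq hz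
  have heps : Filter.Tendsto (fun n : ℕ => 1 / (((φ n : ℕ) : ℝ) + 1)) Filter.atTop (nhds 0) :=
    (tendsto_one_div_add_atTop_nhds_zero_nat (𝕜 := ℝ)).comp hφ.tendsto_atTop
  have hle : ∀ i, w i ≤ f w i := by
    intro i
    by_contra hcon
    push Not at hcon
    have hwi : 0 < w i := lt_of_le_of_lt ((hf w hw).1 i) hcon
    have hopen : IsOpen {x : I → ℝ | f x i < x i} :=
      isOpen_lt ((continuous_apply i).comp hcont) (continuous_apply i)
    obtain ⟨δ, hδ, hball⟩ := Metric.isOpen_iff.mp hopen w hcon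
    have e1 := heps.eventually (gt_mem_nhds (show (0:ℝ) < min (δ / 2) (w i / 2) by positivity))
    have e2 := hlim.eventually (Metric.ball_mem_nhds w (show 0 < δ / 2 by positivity))
    have e3 := ((continuous_apply i).tendsto w |>.comp hlim).eventually
      (lt_mem_nhds (show w i / 2 < w i by linarith))
    obtain ⟨n, h1, h2, h3⟩ := (e1.and (e2.and e3)).exists
    simp only [Function.comp] at h2 h3
    rw [lt_min_iff] at h1
    rcases hzi (φ n) i with h | ⟨x, hx, hx'⟩
    · linarith [h1.2]
    · have : x ∈ Metric.ball w δ := by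
        rw [Metric.mem_ball]
        linarith [dist_triangle x (z (φ n)) w, h1.1]
      have := hball this
      change f x i < x i at this
      linarith
  refine ⟨w, hw, ?_⟩
  have hs : ∑ i, w i = ∑ i, f w i := by rw [hw.2, (hf w hw).2]
  have := (Finset.sum_eq_sum_iff_of_le (fun i _ => hle i)).mp hs
  funext i
  exact (this i (mem_univ i)).symm

end Brouwer
section Nash

variable {n : ℕ} {s : Fin n → ℕ}

lemma mulExt_continuous (u : (∀ j, Fin (s j + 1)) → ℝ) : Continuous (mulExt u) := by
  unfold mulExt
  fun_prop

lemma mulExt_expand (u : (∀ j, Fin (s j + 1)) → ℝ) (x : ∀ i, Fin (s i + 1) → ℝ) (i : Fin n) :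
    mulExt u x = ∑ α, x i α * mulExt u (Function.update x i (pureVec α)) := by
  unfold mulExt
  simp_rw [Finset.mul_sum]
  rw [Finset.sum_comm]
  refine Finset.sum_congr rfl fun p _ => ?_
  have h : ∀ α, ∏ j, (Function.update x i (pureVec α)) j (p j) =
      (if p i = α then 1 else 0) * ∏ j ∈ univ.erase i, x j (p j) := by
    intro α
    rw [← Finset.mul_prod_erase univ _ (mem_univ i)]
    congr 1
    · simp [pureVec]
    · refine Finset.prod_congr rfl fun j hj => ?_
      rw [Function.update_of_ne (Finset.ne_of_mem_erase hj)]
  simp_rw [h]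
  rw [← Finset.mul_prod_erase univ _ (mem_univ i)]
  rw [Finset.sum_eq_single (p i)]
  · simp; ring
  · intro b _ hb
    simp [Ne.symm hb]
  · simp

/-- Nash's incentive. -/
noncomputable def nashPhi (u : Fin n → (∀ j, Fin (s j + 1)) → ℝ)
    (x : ∀ i, Fin (s i + 1) → ℝ) : ∀ i, Fin (s i + 1) → ℝ :=
  fun i α => max 0 (mulExt (u i) (Function.update x i (pureVec α)) - mulExt (u i) x)

lemma nashPhi_nonneg (u : Fin n → (∀ j, Fin (s j + 1)) → ℝ)
    (x : ∀ i, Fin (s i + 1) → ℝ) (i α) : 0 ≤ nashPhi u x i α := le_max_left _ _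

lemma nashPhi_sum_nonneg (u : Fin n → (∀ j, Fin (s j + 1)) → ℝ)
    (x : ∀ i, Fin (s i + 1) → ℝ) (i) : 0 ≤ ∑ α, nashPhi u x i α :=
  Finset.sum_nonneg fun α _ => nashPhi_nonneg u x i α

lemma nashPhi_continuous (u : Fin n → (∀ j, Fin (s j + 1)) → ℝ) (i α) :
    Continuous (fun x => nashPhi u x i α) := by
  unfold nashPhi
  have h1 := mulExt_continuous (u i)
  have h2 : Continuous (fun x : ∀ i, Fin (s i + 1) → ℝ => Function.update x i (pureVec α)) :=
    continuous_id.update i continuous_const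
  exact continuous_const.max ((h1.comp h2).sub h1)

lemma Tmap_continuous (u : Fin n → (∀ j, Fin (s j + 1)) → ℝ) :
    Continuous (Tmap (nashPhi u)) := by
  unfold Tmap
  refine continuous_pi fun i => continuous_pi fun α => ?_
  refine Continuous.div ?_ ?_ ?_
  · have h : Continuous (fun x : ∀ i, Fin (s i + 1) → ℝ => x i α) := by fun_prop
    exact h.add (nashPhi_continuous u i α)
  · exact continuous_const.add (continuous_finsetSum _ fun β _ => nashPhi_continuous u i β)
  · intro x
    have := nashPhi_sum_nonneg u x i
    positivity

lemma Tmap_mem (u : Fin n → (∀ j, Fin (s j + 1)) → ℝ) (x) (hx : x ∈ Δset s) :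
    Tmap (nashPhi u) x ∈ Δset s := by
  constructor
  · intro i α
    have := nashPhi_sum_nonneg u x i
    have := nashPhi_nonneg u x i α
    have := hx.1 i α
    exact div_nonneg (by linarith) (by linarith)
  · intro i
    have := nashPhi_sum_nonneg u x i
    unfold Tmap
    rw [← Finset.sum_div, Finset.sum_add_distrib, hx.2 i]
    exact div_self (by linarith)

lemma nash_of_fixed (u : Fin n → (∀ j, Fin (s j + 1)) → ℝ) (x) (hx : x ∈ Δset s)
    (hfix : Tmap (nashPhi u) x = x) : NashEq u x := by
  intro i
  have hS := nashPhi_sum_nonneg u x i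
  have heq : ∀ α, nashPhi u x i α = x i α * ∑ β, nashPhi u x i β := by
    intro α
    have h := congrFun (congrFun hfix i) α
    unfold Tmap at h
    rw [div_eq_iff (by positivity)] at h
    linarith
  have hex := mulExt_expand (u i) x i
  -- some played strategy does not improve
  obtain ⟨α, hα, hα'⟩ : ∃ α, 0 < x i α ∧
      mulExt (u i) (Function.update x i (pureVec α)) ≤ mulExt (u i) x := by
    by_contra hcon
    push Not at hcon
    have h1 : ∑ α, x i α * mulExt (u i) x <
        ∑ α, x i α * mulExt (u i) (Function.update x i (pureVec α)) := by
      apply Finset.sum_lt_sum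
      · intro α _
        rcases (hx.1 i α).eq_or_lt with h | h
        · simp [← h]
        · exact mul_le_mul_of_nonneg_left (hcon α h).le h.le
      · obtain ⟨α, hα⟩ : ∃ α, 0 < x i α := by
          by_contra hno
          push Not at hno
          have := Finset.sum_nonpos (s := univ) (fun α _ => hno α)
          rw [hx.2 i] at this
          linarith
        exact ⟨α, mem_univ _, mul_lt_mul_of_pos_left (hcon α hα) hα⟩
    rw [← hex, ← Finset.sum_mul, hx.2 i, one_mul] at h1
    exact lt_irrefl _ h1
  have h0 : nashPhi u x i α = 0 := max_eq_left (by linarith)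
  have hS0 : ∑ β, nashPhi u x i β = 0 := by
    have := heq α
    rw [h0] at this
    rcases mul_eq_zero.mp this.symm with h | h
    · linarith
    · exact h
  have hle : ∀ β, mulExt (u i) (Function.update x i (pureVec β)) ≤ mulExt (u i) x := by
    intro β
    have h1 : nashPhi u x i β = 0 := by rw [heq β, hS0, mul_zero]
    have h2 : mulExt (u i) (Function.update x i (pureVec β)) - mulExt (u i) x ≤ nashPhi u x i β :=
      le_max_right _ _
    linarith
  apply le_antisymm
  · calc mulExt (u i) x = ∑ α, x i α * mulExt (u i) (Function.update x i (pureVec α)) := hex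
      _ ≤ ∑ α, x i α * Finset.univ.sup' Finset.univ_nonempty
            (fun α => mulExt (u i) (Function.update x i (pureVec α))) := by
          refine Finset.sum_le_sum fun α _ => mul_le_mul_of_nonneg_left ?_ (hx.1 i α)
          exact Finset.le_sup' (fun α => mulExt (u i) (Function.update x i (pureVec α)))
            (mem_univ α)
      _ = _ := by rw [← Finset.sum_mul, hx.2 i, one_mul]
  · exact Finset.sup'_le _ _ fun β _ => hle β

/-- Rescaled block of a point of the big simplex. -/
noncomputable def blockSum (y : (Σ i, Fin (s i + 1)) → ℝ) (i : Fin n) : ℝ :=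
  ∑ α, (n : ℝ) * y ⟨i, α⟩

/-- Retraction from the big simplex to the product of simplices. -/
noncomputable def retr (y : (Σ i, Fin (s i + 1)) → ℝ) : ∀ i, Fin (s i + 1) → ℝ :=
  fun i α => ((n : ℝ) * y ⟨i, α⟩ + max 0 (1 - blockSum y i) / ((s i : ℝ) + 1)) /
    (blockSum y i + max 0 (1 - blockSum y i))

lemma retr_den (y : (Σ i, Fin (s i + 1)) → ℝ) (i : Fin n) :
    0 < blockSum y i + max 0 (1 - blockSum y i) := by
  linarith [le_max_right 0 (1 - blockSum y i)]

lemma retr_continuous : Continuous (retr (s := s)) := by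
  have hb : ∀ i, Continuous (fun y : (Σ i, Fin (s i + 1)) → ℝ => blockSum y i) := by
    intro i
    unfold blockSum
    fun_prop
  unfold retr
  refine continuous_pi fun i => continuous_pi fun α => ?_
  have hd : Continuous (fun y : (Σ i, Fin (s i + 1)) → ℝ => max 0 (1 - blockSum y i)) :=
    continuous_const.max (continuous_const.sub (hb i))
  refine Continuous.div ?_ ((hb i).add hd) fun y => (retr_den y i).ne'
  exact (continuous_const.mul (continuous_apply _)).add (hd.div_const _)

lemma retr_mem (y : (Σ i, Fin (s i + 1)) → ℝ) (hy : ∀ p, 0 ≤ y p) : retr y ∈ Δset s := by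
  constructor
  · intro i α
    have h1 := retr_den y i
    have h2 := hy ⟨i, α⟩
    have h3 := le_max_left 0 (1 - blockSum y i)
    unfold retr
    positivity
  · intro i
    have h1 := retr_den y i
    unfold retr
    rw [← Finset.sum_div, Finset.sum_add_distrib, div_eq_one_iff_eq h1.ne']
    have h4 : ((s i : ℝ) + 1) ≠ 0 := by positivity
    simp only [Finset.sum_const, card_univ, Fintype.card_fin, nsmul_eq_mul]
    push_cast
    rw [mul_div_cancel₀ _ h4]
    rfl

end Nash

/-- Nash's theorem: every finite game has a Nash equilibrium. -/
theorem exists_nash_equilibrium {n : ℕ} (hn : 0 < n) (s : Fin n → ℕ)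
    (u : Fin n → (∀ j, Fin (s j + 1)) → ℝ) :
    ∃ x ∈ Δset s, NashEq u x := by
  have hn0 : (0 : ℝ) < n := by exact_mod_cast hn
  let F : ((Σ i, Fin (s i + 1)) → ℝ) → (Σ i, Fin (s i + 1)) → ℝ :=
    fun y p => Tmap (nashPhi u) (retr y) p.1 p.2 / n
  have hFc : Continuous F := by
    have h := (Tmap_continuous u).comp (retr_continuous (s := s))
    refine continuous_pi fun p => ?_
    exact (((continuous_apply p.2).comp (continuous_apply p.1)).comp h).div_const _
  have hF : ∀ y ∈ stdSimplex ℝ (Σ i, Fin (s i + 1)), F y ∈ stdSimplex ℝ (Σ i, Fin (s i + 1)) := by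
    intro y hy
    have hm := Tmap_mem u _ (retr_mem y hy.1)
    refine ⟨fun p => div_nonneg (hm.1 _ _) hn0.le, ?_⟩
    simp only [F]
    rw [← Finset.sum_div, Fintype.sum_sigma]
    simp only [hm.2]
    simp [hn0.ne']
  obtain ⟨y, hy, hfix⟩ := brouwer_simplex (⟨⟨0, hn⟩, 0⟩ : Σ i, Fin (s i + 1)) F hFc hF
  have hm := Tmap_mem u _ (retr_mem y hy.1)
  have hny : ∀ i α, (n : ℝ) * y ⟨i, α⟩ = Tmap (nashPhi u) (retr y) i α := by
    intro i α
    have h := congrFun hfix ⟨i, α⟩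
    simp only [F] at h
    rw [← h, mul_div_cancel₀ _ hn0.ne']
  have hb : ∀ i, blockSum y i = 1 := by
    intro i
    unfold blockSum
    simp only [hny, hm.2]
  have hr : Tmap (nashPhi u) (retr y) = retr y := by
    funext i α
    rw [← hny]
    simp [retr, hb]
  exact ⟨retr y, retr_mem y hy.1, nash_of_fixed u _ (retr_mem y hy.1) hr⟩
end
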